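/- arXiv:2001.01263 — 2 statements merged into one kernel-verified Lean document; each statement's English description precedes it below -/
import Mathlib

section
/- Let G be a locally nilpotent group (every finitely generated subgroup of G is nilpotent) which is residually finite, and suppose G contains an element x whose centralizer C_G(x) is finite. Then G is finite. -/
/-!
Since `C_G(x)` is finite and `G` is residually finite, some normal subgroup `N` of finite index
meets `C_G(x)` trivially. For `g ∈ N`, the iterated commutators `[g, x, …, x]` all lie in `N`, and
they are eventually trivial because `⟨g, x⟩` is nilpotent. If such a commutator `[h, x]` is trivial,
then `h ∈ N ∩ C_G(x) = 1`; descending, `g = 1`. Hence `N` is trivial and `G` is finite.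
-/

/-- A topological group `H` is a pro-`p` group if for every open normal subgroup `N`
the quotient `H / N` is a finite `p`-group (i.e. has cardinality a power of `p`). -/
def IsProP (p : ℕ) (H : Type*) [Group H] [TopologicalSpace H] : Prop :=
  ∀ N : Subgroup H, N.Normal → IsOpen (N : Set H) → ∃ k : ℕ, Nat.card (H ⧸ N) = p ^ k

/-- An element `x` of a topological group `G` has prime power order if there is a prime `p`
such that in every quotient by an open normal subgroup the image of `x` has `p`-power order. -/
def HasPrimePowerOrder {G : Type*} [Group G] [TopologicalSpace G] (x : G) : Prop :=
  ∃ p : ℕ, p.Prime ∧ ∀ N : Subgroup G, IsOpen (N : Set G) → ∀ hN : N.Normal,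
    letI := hN
    ∃ k : ℕ, orderOf (QuotientGroup.mk x : G ⧸ N) = p ^ k

/-- A topological group is pronilpotent if every quotient by an open normal subgroup
is nilpotent. -/
def IsPronilpotent (G : Type*) [Group G] [TopologicalSpace G] : Prop :=
  ∀ N : Subgroup G, IsOpen (N : Set G) → ∀ hN : N.Normal,
    letI := hN
    Group.IsNilpotent (G ⧸ N)

/-- A topological group is prosoluble if every quotient by an open normal subgroup
is solvable. -/
def IsProsoluble (G : Type*) [Group G] [TopologicalSpace G] : Prop :=
  ∀ N : Subgroup G, IsOpen (N : Set G) → ∀ hN : N.Normal,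
    letI := hN
    IsSolvable (G ⧸ N)

/-- A topological group is virtually pro-`p` if it has an open subgroup which is pro-`p`
(with the subspace topology). -/
def VirtuallyProP (p : ℕ) (G : Type*) [Group G] [TopologicalSpace G] : Prop :=
  ∃ H : Subgroup G, IsOpen (H : Set G) ∧ IsProP p ↥H

/-- A group is generalized quaternion if it is isomorphic to the dicyclic group of
order `2 ^ n` for some `n ≥ 3`. -/
def IsGeneralizedQuaternion (Q : Type*) [Group Q] : Prop :=
  ∃ n : ℕ, 3 ≤ n ∧ Nonempty (Q ≃* QuaternionGroup (2 ^ (n - 2)))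

open scoped commutatorElement in
/-- In a nilpotent group, a normal subgroup meeting the centralizer of `x` trivially is trivial. -/
theorem eq_one_of_mem_of_isNilpotent {H : Type*} [Group H] [Group.IsNilpotent H]
    (M : Subgroup H) [M.Normal] (x : H) (hM : ∀ h ∈ M, h * x = x * h → h = 1)
    (g : H) (hg : g ∈ M) : g = 1 := by
  obtain ⟨n, hn⟩ := Subgroup.nilpotent_iff_lowerCentralSeries.mp ‹Group.IsNilpotent H›
  -- Descending along the lower central series: `h` in its `k`-th term is sent one term further
  -- down by `h ↦ ⁅h, x⁆`.
  have key : ∀ j k : ℕ, k + j = n → ∀ h ∈ M, h ∈ Subgroup.lowerCentralSeries (⊤ : Subgroup H) k → h = 1 := by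
    intro j
    induction j with
    | zero =>
      intro k hk h _ hh
      obtain rfl : k = n := hk
      rw [hn] at hh
      exact Subgroup.mem_bot.mp hh
    | succ j ih =>
      intro k hk h hhM hh
      have h1 : ⁅h, x⁆ = 1 := by
        refine ih (k + 1) (by omega) _ ?_ ?_
        · rw [commutatorElement_def, mul_assoc, mul_assoc]
          refine M.mul_mem hhM ?_
          rw [← mul_assoc]
          exact Subgroup.Normal.conj_mem inferInstance _ (M.inv_mem hhM) x
        · exact Subgroup.commutator_mem_commutator hh (Subgroup.mem_top x)
      exact hM h hhM (commutatorElement_eq_one_iff_mul_comm.mp h1)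
  exact key n 0 (by omega) g hg (by simp)

/-- A residually finite locally nilpotent group containing an element
with finite centralizer is finite. -/
theorem locally_nilpotent_residually_finite_finite_centralizer
    (G : Type*) [Group G]
    (hln : ∀ H : Subgroup G, H.FG → Group.IsNilpotent ↥H)
    (hrf : ∀ g : G, g ≠ 1 → ∃ N : Subgroup G, N.Normal ∧ N.FiniteIndex ∧ g ∉ N)
    (x : G) (hx : Finite ↥(Subgroup.centralizer {x})) :
    Finite G := by
  classical
  have hsep : ∀ c : Subgroup.centralizer {x}, ∃ N : Subgroup G,
      N.Normal ∧ N.FiniteIndex ∧ ((c : G) ∈ N → (c : G) = 1) := by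
    intro c
    by_cases hc : (c : G) = 1
    · exact ⟨⊤, inferInstance, inferInstance, fun _ => hc⟩
    · obtain ⟨N, h1, h2, h3⟩ := hrf c hc
      exact ⟨N, h1, h2, fun h => absurd h h3⟩
  choose N hNn hNf hN using hsep
  have hfin : (⨅ c, N c).FiniteIndex := Subgroup.finiteIndex_iInf hNf
  have hnorm : (⨅ c, N c).Normal := Subgroup.normal_iInf_normal hNn
  have hbot : (⨅ c, N c) = ⊥ := by
    rw [Subgroup.eq_bot_iff_forall]
    intro g hg
    let H : Subgroup G := Subgroup.closure {g, x}
    have hnil : Group.IsNilpotent H := hln H ⟨{g, x}, by simp [H]⟩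
    have hgH : g ∈ H := Subgroup.subset_closure (by simp)
    have hxH : x ∈ H := Subgroup.subset_closure (by simp)
    have := eq_one_of_mem_of_isNilpotent ((⨅ c, N c).subgroupOf H) ⟨x, hxH⟩ ?_ ⟨g, hgH⟩
      (Subgroup.mem_subgroupOf.mpr hg)
    · exact congrArg Subtype.val this
    · intro h hh hcomm
      have hc : (h : G) ∈ Subgroup.centralizer {x} :=
        Subgroup.mem_centralizer_singleton_iff.mpr (congrArg Subtype.val hcomm)
      exact Subtype.ext (hN ⟨h, hc⟩ (Subgroup.mem_iInf.mp (Subgroup.mem_subgroupOf.mp hh) _))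
  rw [hbot] at hfin
  exact (Subgroup.finite_iff_finite_and_finiteIndex (⊥ : Subgroup G)).mpr ⟨inferInstance, hfin⟩
end

section
/- Let S : ℕ → Type be a family of finite nonabelian simple groups and let G be the product group ∏_{i ∈ ℕ} S i, equipped with the product topology (so G is a profinite group). Suppose that each element of G has either finite order or prime power order, where an element x = (a_i) has prime power order if there is a prime p such that the order of each component a_i is a power of p. Then G has finite exponent: there exists a positive integer n such that x^n = 1 for all x in G. -/
theorem exists_orderOf_ne_prime_pow {G : Type*} [Group G] [Finite G] [IsSimpleGroup G]
    (hnab : ¬ ∀ a b : G, a * b = b * a) (p : ℕ) (hp : p.Prime) :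
    ∃ g : G, ∀ k : ℕ, orderOf g ≠ p ^ k := by
  by_contra! h
  have := Fact.mk hp
  have hG : IsPGroup p G := IsPGroup.iff_orderOf.mpr h
  have hc : Nontrivial (Subgroup.center G) := hG.center_nontrivial
  rcases (inferInstance : (Subgroup.center G).Normal).eq_bot_or_eq_top with h0 | h0
  · exact (Subgroup.nontrivial_iff_ne_bot _).mp hc h0
  · refine hnab fun a b => ?_
    have hb : a ∈ Subgroup.center G := h0 ▸ Subgroup.mem_top a
    exact (Subgroup.mem_center_iff.mp hb b).symm

theorem finite_exponent_of_update_isOfFinOrder (S : ℕ → Type) [∀ i, Group (S i)]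
    [∀ i, Finite (S i)] (a : ∀ i, S i) (ha : ∀ i, ∀ s : S i, orderOf s ≤ orderOf (a i))
    (g : S 0) (hfin : IsOfFinOrder (Function.update a 0 g)) :
    ∃ n : ℕ, 0 < n ∧ ∀ x : (∀ i, S i), x ^ n = 1 := by
  obtain ⟨m, hm, hpow⟩ := isOfFinOrder_iff_pow_eq_one.mp hfin
  have hbound : ∀ i, orderOf (a i) ≤ m + orderOf (a 0) := by
    intro i
    by_cases hi : i = 0
    · subst hi
      omega
    · have h1 : a i ^ m = 1 := by
        simpa [hi] using congrFun hpow i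
      have := orderOf_le_of_pow_eq_one hm h1
      omega
  refine ⟨(m + orderOf (a 0)).factorial, Nat.factorial_pos _, fun x => ?_⟩
  ext i
  exact orderOf_dvd_iff_pow_eq_one.mp
    (Nat.dvd_factorial (orderOf_pos (x i)) ((ha i (x i)).trans (hbound i)))

/-- A Cartesian product of finite nonabelian simple groups in which each
element has either finite order or prime power order (componentwise) has finite exponent. -/
theorem product_of_simple_groups_finite_exponent
    (S : ℕ → Type) [∀ i, Group (S i)] [∀ i, Finite (S i)]
    (hsimple : ∀ i, IsSimpleGroup (S i))
    (hnab : ∀ i, ¬ ∀ a b : S i, a * b = b * a)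
    (hCP : ∀ x : (∀ i, S i),
      IsOfFinOrder x ∨ ∃ p : ℕ, p.Prime ∧ ∀ i, ∃ k : ℕ, orderOf (x i) = p ^ k) :
    ∃ n : ℕ, 0 < n ∧ ∀ x : (∀ i, S i), x ^ n = 1 := by
  choose a ha using fun i => Finite.exists_max (fun s : S i => orderOf s)
  rcases hCP a with hfin | ⟨p, hp, hap⟩
  · exact finite_exponent_of_update_isOfFinOrder S a ha (a 0) (by simpa using hfin)
  obtain ⟨g, hg⟩ := exists_orderOf_ne_prime_pow (hnab 0) p hp
  refine finite_exponent_of_update_isOfFinOrder S a ha g ?_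
  rcases hCP (Function.update a 0 g) with hfin | ⟨q, hq, hyq⟩
  · exact hfin
  have hqp : p ≠ q := by
    rintro rfl
    obtain ⟨k, hk⟩ := hyq 0
    exact hg k (by simpa using hk)
  refine isOfFinOrder_iff_pow_eq_one.mpr ⟨orderOf g, orderOf_pos g, ?_⟩
  ext i
  by_cases hi : i = 0
  · subst hi
    simp [pow_orderOf_eq_one]
  · obtain ⟨k, hk⟩ := hap i
    obtain ⟨l, hl⟩ := hyq i
    rw [Function.update_of_ne hi] at hl
    have hcop : Nat.Coprime (orderOf (a i)) (orderOf (a i)) := by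
      nth_rewrite 1 [hk]
      rw [hl]
      exact Nat.Coprime.pow _ _ ((Nat.coprime_primes hp hq).mpr hqp)
    have h1 : a i = 1 := orderOf_eq_one_iff.mp ((Nat.coprime_self _).mp hcop)
    simp [hi, h1]
end
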